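/- Let n ≥ 1 and let S be a unitary n×n complex matrix (indices in Fin n, with distinguished index 0) such that every entry of S is nonzero, S_{a,0} = S_{0,a} = 1/√n for all a, and there is an involution ι of Fin n with S_{a,ι(b)} = conj(S_{a,b}) for all a, b. Let π be a permutation of Fin n and define the matrix Λ by Λ_{b,d} = Σ_a S_{b,a} · conj(S_{d,π(a)}). Then every unitary n×n matrix Λ' satisfying Λ_{a,c} · Λ'_{b,d} · (S_{c,d} − S_{a,b}) = 0 for all a, b, c, d is monomial; that is, there exist a permutation π̃ of Fin n and real phases θ_b such that Λ'_{b,d} = e^{iθ_b} if d = π̃(b) and Λ'_{b,d} = 0 otherwise. -/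

import Mathlib

open scoped BigOperators Matrix

/-!
Writing `P` for the permutation matrix of `π`, we have `Λ = S * P * Sᴴ`, so `Λ` is invertible and
none of its columns vanishes. If `Λ' b d` and `Λ' b d'` are both nonzero, pick for each `c` some `a`
with `Λ a c ≠ 0`: consistency gives `S c d = S a b = S c d'`. The columns `d` and `d'` of `S` then
agree, and so `d = d'`. An invertible matrix with at most one nonzero entry in each row is monomial,
and the nonzero entries of a unitary monomial matrix are phases.
-/

section Monomial

/-- A matrix is monomial if every row and every column contains exactly one nonzero entry. -/
def IsMonomial {m R : Type*} [Zero R] (A : Matrix m m R) : Prop :=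
  (∀ i, ∃! j, A i j ≠ 0) ∧ ∀ j, ∃! i, A i j ≠ 0

theorem isMonomial_iff_exists_perm {m R : Type*} [Zero R] {A : Matrix m m R} :
    IsMonomial A ↔ ∃ σ : Equiv.Perm m, ∀ i j, A i j ≠ 0 ↔ j = σ i := by
  constructor
  · rintro ⟨hrow, hcol⟩
    choose f hf hf_unique using hrow
    have hf_bij : Function.Bijective f := by
      constructor
      · intro i i' h
        exact (hcol (f i)).unique (hf i) (h ▸ hf i')
      · intro j
        obtain ⟨i, hi, -⟩ := hcol j
        exact ⟨i, (hf_unique i j hi).symm⟩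
    refine ⟨Equiv.ofBijective f hf_bij, fun i j => ⟨hf_unique i j, ?_⟩⟩
    rintro rfl
    exact hf i
  · rintro ⟨σ, hσ⟩
    simp only [IsMonomial, hσ]
    refine ⟨fun i => existsUnique_eq, fun j => ?_⟩
    simpa only [eq_comm] using σ.bijective.existsUnique j

variable {m R : Type*} [Fintype m] [DecidableEq m]

theorem exists_row_apply_ne_zero_of_isUnit [Semiring R] [Nontrivial R] {A : Matrix m m R}
    (hA : IsUnit A) (i : m) : ∃ j, A i j ≠ 0 :=
  Function.ne_iff.1 ((Matrix.linearIndependent_rows_of_isUnit hA).ne_zero i)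

variable [CommSemiring R] [Nontrivial R] {A : Matrix m m R}

theorem exists_col_apply_ne_zero_of_isUnit (hA : IsUnit A) (j : m) : ∃ i, A i j ≠ 0 :=
  Function.ne_iff.1 ((Matrix.linearIndependent_cols_of_isUnit hA).ne_zero j)

theorem isMonomial_of_isUnit (hA : IsUnit A)
    (hrow : ∀ i j j', A i j ≠ 0 → A i j' ≠ 0 → j = j') : IsMonomial A := by
  choose f hf using exists_row_apply_ne_zero_of_isUnit hA
  have hf_surj : Function.Surjective f := by
    intro j
    obtain ⟨i, hi⟩ := exists_col_apply_ne_zero_of_isUnit hA j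
    exact ⟨i, hrow i _ _ (hf i) hi⟩
  refine isMonomial_iff_exists_perm.2
    ⟨Equiv.ofBijective f hf_surj.bijective_of_finite, fun i j => ⟨fun h => hrow i _ _ h (hf i), ?_⟩⟩
  rintro rfl
  exact hf i

end Monomial

section Unitary

variable {m : Type*} [Fintype m] [DecidableEq m]

theorem norm_apply_eq_one_of_mem_unitaryGroup {𝕜 : Type*} [RCLike 𝕜] {U : Matrix m m 𝕜}
    (hU : U ∈ Matrix.unitaryGroup m 𝕜) {i j : m} (hrow : ∀ k, k ≠ j → U i k = 0) :
    ‖U i j‖ = 1 := by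
  have h : U i j * star (U i j) = 1 := calc
    U i j * star (U i j) = ∑ k, U i k * star (U i k) :=
      Eq.symm <| Fintype.sum_eq_single j fun k hk => mul_eq_zero_of_left (hrow k hk) _
    _ = (U * star U) i i := rfl
    _ = 1 := by rw [Matrix.mem_unitaryGroup_iff.1 hU, Matrix.one_apply_eq]
  exact CStarRing.norm_of_mem_unitary (Unitary.mem_iff_self_mul_star.2 h)

theorem IsMonomial.exists_perm_exp_of_mem_unitaryGroup {U : Matrix m m ℂ} (hmon : IsMonomial U)
    (hU : U ∈ Matrix.unitaryGroup m ℂ) :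
    ∃ (σ : Equiv.Perm m) (θ : m → ℝ),
      ∀ i j, U i j = if j = σ i then Complex.exp ((θ i : ℂ) * Complex.I) else 0 := by
  obtain ⟨σ, hσ⟩ := isMonomial_iff_exists_perm.1 hmon
  have hzero (i j : m) (hj : j ≠ σ i) : U i j = 0 := not_not.1 (mt (hσ i j).1 hj)
  have hphase (i : m) : ∃ t : ℝ, Complex.exp (t * Complex.I) = U i (σ i) :=
    (Complex.norm_eq_one_iff _).1 (norm_apply_eq_one_of_mem_unitaryGroup hU (hzero i))
  choose θ hθ using hphase
  refine ⟨σ, θ, fun i j => ?_⟩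
  split_ifs with h
  · rw [h, hθ]
  · exact hzero i j h

end Unitary

section Consistency

/-- The consistency condition that the braiding of string operators along two transversally
intersecting loops imposes on the matrices `Λ` and `Λ'` by which a protected gate acts on them.
The two loops may carry different label sets `m` and `k`. -/
def IsBraidingConsistent {m k R : Type*} [Ring R]
    (S : Matrix m k R) (Λ : Matrix m m R) (Λ' : Matrix k k R) : Prop :=
  ∀ a b c d, Λ a c * Λ' b d * (S c d - S a b) = 0

theorem IsBraidingConsistent.col_eq {m k R : Type*} [Ring R] [NoZeroDivisors R]
    {S : Matrix m k R} {Λ : Matrix m m R} {Λ' : Matrix k k R} (h : IsBraidingConsistent S Λ Λ')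
    (hΛ : ∀ c, ∃ a, Λ a c ≠ 0) {b d d' : k} (hd : Λ' b d ≠ 0) (hd' : Λ' b d' ≠ 0) :
    S.col d = S.col d' := by
  funext c
  obtain ⟨a, ha⟩ := hΛ c
  have entry_eq {e : k} (he : Λ' b e ≠ 0) : S c e = S a b :=
    sub_eq_zero.1 ((mul_eq_zero.1 (h a b c e)).resolve_left (mul_ne_zero ha he))
  exact (entry_eq hd).trans (entry_eq hd').symm

variable {m R : Type*} [Fintype m] [DecidableEq m] [CommRing R]

theorem IsBraidingConsistent.isMonomial [IsDomain R] {S Λ Λ' : Matrix m m R}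
    (h : IsBraidingConsistent S Λ Λ') (hS : IsUnit S) (hΛ : IsUnit Λ) (hΛ' : IsUnit Λ') :
    IsMonomial Λ' :=
  isMonomial_of_isUnit hΛ' fun _ _ _ hd hd' =>
    (Matrix.linearIndependent_cols_of_isUnit hS).injective <|
      h.col_eq (exists_col_apply_ne_zero_of_isUnit hΛ) hd hd'

theorem isUnit_mul_conjTranspose_submatrix [StarRing R] {S : Matrix m m R} (hS : IsUnit S)
    (π : Equiv.Perm m) : IsUnit (S * (S.submatrix id π)ᴴ) :=
  hS.mul <| (Matrix.isUnit_conjTranspose _).2 <|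
    (Matrix.isUnit_submatrix_equiv (Equiv.refl m) π).2 hS

end Consistency

theorem abelian_string_operators_permuted_general {m : Type*} [Fintype m] [DecidableEq m]
    {S : Matrix m m ℂ} (hS : IsUnit S) (π : Equiv.Perm m) {Λ : Matrix m m ℂ}
    (hΛ : ∀ b d, Λ b d = ∑ a, S b a * (starRingEnd ℂ) (S d (π a)))
    {Λ' : Matrix m m ℂ} (hΛ' : Λ' ∈ Matrix.unitaryGroup m ℂ) (h : IsBraidingConsistent S Λ Λ') :
    ∃ (πt : Equiv.Perm m) (θ : m → ℝ),
      ∀ b d, Λ' b d = if d = πt b then Complex.exp ((θ b : ℂ) * Complex.I) else 0 := by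
  have hΛ_eq : Λ = S * (S.submatrix id π)ᴴ := Matrix.ext hΛ
  have hΛ_unit : IsUnit Λ := hΛ_eq ▸ isUnit_mul_conjTranspose_submatrix hS π
  have hΛ'_unit : IsUnit Λ' := Unitary.isUnit_coe (U := ⟨Λ', hΛ'⟩)
  exact (h.isMonomial hS hΛ_unit hΛ'_unit).exists_perm_exp_of_mem_unitaryGroup hΛ'

/-- **Abelian anyon models: protected gates permute string operators.**
Let `S` be a unitary `n × n` matrix with all entries nonzero, distinguished row and
column constantly `1/√n`, and a charge-conjugation symmetry given by an involution `ι`.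
Given a permutation `π`, let `Λ b d = ∑ a, S b a * conj (S d (π a))`.  Then any unitary
`Λ'` satisfying the consistency condition `Λ a c * Λ' b d * (S c d − S a b) = 0` for all
`a, b, c, d` is monomial: there are a permutation `π̃` and phases `θ b` with
`Λ' b d = e^{iθ_b}` if `d = π̃ b` and `Λ' b d = 0` otherwise. -/
theorem abelian_string_operators_permuted
    (n : ℕ) [NeZero n]
    (S : Matrix (Fin n) (Fin n) ℂ) (hS : S ∈ Matrix.unitaryGroup (Fin n) ℂ)
    (hnz : ∀ a b, S a b ≠ 0)
    (hcol : ∀ a, S a 0 = 1 / (Real.sqrt n : ℂ))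
    (hrow : ∀ a, S 0 a = 1 / (Real.sqrt n : ℂ))
    (ι : Fin n → Fin n) (hι : Function.Involutive ι)
    (hιS : ∀ a b, S a (ι b) = (starRingEnd ℂ) (S a b))
    (π : Equiv.Perm (Fin n))
    (Λ : Matrix (Fin n) (Fin n) ℂ)
    (hΛ : ∀ b d, Λ b d = ∑ a, S b a * (starRingEnd ℂ) (S d (π a))) :
    ∀ Λ' : Matrix (Fin n) (Fin n) ℂ, Λ' ∈ Matrix.unitaryGroup (Fin n) ℂ →
      (∀ a b c d, Λ a c * Λ' b d * (S c d - S a b) = 0) →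
      ∃ (πt : Equiv.Perm (Fin n)) (θ : Fin n → ℝ),
        ∀ b d, Λ' b d =
          if d = πt b then Complex.exp ((θ b : ℂ) * Complex.I) else 0 := by
  intro Λ' hΛ' h
  exact abelian_string_operators_permuted_general (Unitary.isUnit_coe (U := ⟨S, hS⟩)) π hΛ hΛ' h
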